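/- arXiv:2011.13967 — 4 statements merged into one kernel-verified Lean document; each statement's English description precedes it below -/
import Mathlib

section
/- Let α > 0 and k be real numbers with 0 ≤ k ≤ α, and let λ > 0. Then for every real x ≥ 1, (λ · x^{k}) / (λ + x^{-2α}) ≤ λ^{1/2 - k/(2α)} · x^{α}. Equivalently, by Young's inequality for products, x^{k-α} · λ^{1/2 + k/(2α)} ≤ ((α-k)/(2α)) · x^{-2α} + ((α+k)/(2α)) · λ. -/
/-! Put `s = 1/2 - k/(2α) ∈ [0, 1]` and `a = x ^ (-2α)`, so that `a ^ s = x ^ (k - α)`. The ratio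
`r = λ/(λ + a)` lies in `[0, 1]`, hence `r ≤ r ^ s ≤ (λ/a) ^ s = λ ^ s * x ^ (α - k)`, and
multiplying by `x ^ k` bounds the shrinkage. The second inequality is the weighted AM-GM inequality
for `a` and `λ` with weights `s` and `1 - s`. -/

theorem div_add_le_div_rpow {a b s : ℝ} (ha : 0 < a) (hb : 0 ≤ b) (hs : s ∈ Set.Icc 0 1) :
    b / (b + a) ≤ (b / a) ^ s := by
  have ratio_nonneg : 0 ≤ b / (b + a) := by positivity
  have ratio_le_one : b / (b + a) ≤ 1 := div_le_one_of_le₀ (by linarith) (by linarith)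
  calc b / (b + a)
      ≤ (b / (b + a)) ^ s := Real.self_le_rpow_of_le_one ratio_nonneg ratio_le_one hs.2
    _ ≤ (b / a) ^ s :=
        Real.rpow_le_rpow ratio_nonneg (by gcongr; linarith) hs.1

theorem half_sub_div_two_mul_mem_Icc {α k : ℝ} (hk : |k| ≤ |α|) :
    1 / 2 - k / (2 * α) ∈ Set.Icc (0 : ℝ) 1 := by
  have ratio_abs_le_one : |k / α| ≤ 1 := by
    rw [abs_div]
    exact div_le_one_of_le₀ hk (abs_nonneg α)
  have half_ratio : k / (2 * α) = k / α / 2 := by rw [mul_comm, div_mul_eq_div_div]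
  obtain ⟨neg_one_le, le_one⟩ := abs_le.mp ratio_abs_le_one
  rw [half_ratio]
  constructor <;> linarith

section

variable {α k lam x : ℝ}

theorem rpow_neg_two_mul_rpow_half_sub (hα : α ≠ 0) (hx : 0 ≤ x) :
    (x ^ (-(2 * α))) ^ (1 / 2 - k / (2 * α)) = x ^ (k - α) := by
  rw [← Real.rpow_mul hx]
  congr 1
  field_simp
  ring

theorem mul_rpow_div_add_rpow_le (hα : α ≠ 0) (hk : |k| ≤ |α|) (hlam : 0 ≤ lam) (hx : 0 < x) :
    lam * x ^ k / (lam + x ^ (-(2 * α))) ≤ lam ^ (1 / 2 - k / (2 * α)) * x ^ α := by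
  have ha : 0 < x ^ (-(2 * α)) := Real.rpow_pos_of_pos hx _
  calc lam * x ^ k / (lam + x ^ (-(2 * α)))
      = lam / (lam + x ^ (-(2 * α))) * x ^ k := mul_div_right_comm _ _ _
    _ ≤ (lam / x ^ (-(2 * α))) ^ (1 / 2 - k / (2 * α)) * x ^ k := by
        gcongr
        exact div_add_le_div_rpow ha hlam (half_sub_div_two_mul_mem_Icc hk)
    _ = lam ^ (1 / 2 - k / (2 * α)) * (x ^ k / x ^ (k - α)) := by
        rw [Real.div_rpow hlam ha.le, rpow_neg_two_mul_rpow_half_sub hα hx.le,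
          div_mul_eq_mul_div, mul_div_assoc]
    _ = lam ^ (1 / 2 - k / (2 * α)) * x ^ α := by rw [← Real.rpow_sub hx, sub_sub_cancel]

theorem rpow_sub_mul_rpow_le_weighted_add (hα : α ≠ 0) (hk : |k| ≤ |α|) (hlam : 0 ≤ lam)
    (hx : 0 ≤ x) :
    x ^ (k - α) * lam ^ (1 / 2 + k / (2 * α)) ≤
      ((α - k) / (2 * α)) * x ^ (-(2 * α)) + ((α + k) / (2 * α)) * lam := by
  obtain ⟨weight_nonneg, weight_le_one⟩ := half_sub_div_two_mul_mem_Icc hk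
  have amgm := Real.geom_mean_le_arith_mean2_weighted (w₂ := 1 / 2 + k / (2 * α))
    weight_nonneg (by linarith) (Real.rpow_nonneg hx (-(2 * α))) hlam (by ring)
  have left_weight : (α - k) / (2 * α) = 1 / 2 - k / (2 * α) := by field_simp
  have right_weight : (α + k) / (2 * α) = 1 / 2 + k / (2 * α) := by field_simp
  rwa [left_weight, right_weight, ← rpow_neg_two_mul_rpow_half_sub hα hx]

theorem stmt2_general (hα : α ≠ 0) (hk : |k| ≤ |α|) (hlam : 0 ≤ lam) (hx : 0 < x) :
    lam * x ^ k / (lam + x ^ (-(2 * α))) ≤ lam ^ (1 / 2 - k / (2 * α)) * x ^ α ∧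
    x ^ (k - α) * lam ^ (1 / 2 + k / (2 * α)) ≤
      ((α - k) / (2 * α)) * x ^ (-(2 * α)) + ((α + k) / (2 * α)) * lam :=
  ⟨mul_rpow_div_add_rpow_le hα hk hlam hx, rpow_sub_mul_rpow_le_weighted_add hα hk hlam hx.le⟩

end

/-- For real numbers `α > 0`, `0 ≤ k ≤ α`, `λ > 0` and every real `x ≥ 1`,
`(λ·x^k)/(λ + x^(-2α)) ≤ λ^(1/2 - k/(2α)) · x^α`, and (equivalently, by Young's inequality)
`x^(k-α) · λ^(1/2 + k/(2α)) ≤ ((α-k)/(2α))·x^(-2α) + ((α+k)/(2α))·λ`. -/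
theorem stmt2 (α k lam : ℝ) (hα : 0 < α) (hk0 : 0 ≤ k) (hkα : k ≤ α) (hlam : 0 < lam) :
    ∀ x : ℝ, 1 ≤ x →
      lam * x ^ k / (lam + x ^ (-(2 * α))) ≤ lam ^ (1 / 2 - k / (2 * α)) * x ^ α ∧
      x ^ (k - α) * lam ^ (1 / 2 + k / (2 * α)) ≤
        ((α - k) / (2 * α)) * x ^ (-(2 * α)) + ((α + k) / (2 * α)) * lam :=
  fun _ hx => stmt2_general hα.ne' (abs_le_abs_of_nonneg hk0 hkα) hlam.le (zero_lt_one.trans_le hx)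
end

section
/- Let m ∈ ℕ (including 0) and let α be a real number with α > m + 1/2. There exists a constant c > 0 (depending only on α and m) such that for every λ ∈ (0,1], Σ_{i=1}^∞ i^{2m} / (1 + λ · i^{2α}) ≥ c · λ^{-(2m+1)/(2α)}. -/
/-!
The terms `i ^ s / (1 + λ * i ^ p)` change behaviour at the scale `X = λ ^ (-1 / p)`, where
`λ * X ^ p = 1`. On the window `[X, 4 * X]` the denominator is bounded and `i ^ s` is comparable
to `X ^ s`, whatever the sign of `s`. Since `X ≥ 1`, the window contains at least `X` integers, so
it alone contributes a constant multiple of `X ^ (s + 1) = λ ^ (-(s + 1) / p)`.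
-/

open scoped ENNReal

theorem rpow_neg_abs_mul_rpow_le_rpow {K x y : ℝ} (s : ℝ) (hx : 0 < x) (hxy : x ≤ y)
    (hyx : y ≤ K * x) : K ^ (-|s|) * x ^ s ≤ y ^ s := by
  have one_le_ratio : 1 ≤ y / x := (one_le_div hx).2 hxy
  have ratio_le : y / x ≤ K := (div_le_iff₀ hx).2 hyx
  calc K ^ (-|s|) * x ^ s ≤ (y / x) ^ (-|s|) * x ^ s := by
        gcongr ?_ * _
        exact Real.rpow_le_rpow_of_nonpos (by positivity) ratio_le (by simp)
    _ ≤ (y / x) ^ s * x ^ s := by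
        gcongr
        exact neg_abs_le s
    _ = y ^ s := by
        rw [← Real.mul_rpow (by positivity) hx.le, div_mul_cancel₀ y hx.ne']

theorem mul_rpow_le_rpow_div_one_add_mul_rpow {K X x lam p : ℝ} (s : ℝ) (hp : 0 ≤ p)
    (hlam : 0 ≤ lam) (hX : 0 < X) (hscale : lam * X ^ p = 1) (hXx : X ≤ x) (hxX : x ≤ K * X) :
    K ^ (-|s|) / (1 + K ^ p) * X ^ s ≤ x ^ s / (1 + lam * x ^ p) := by
  have hx : 0 < x := hX.trans_le hXx
  have hK : 0 ≤ K := (pos_of_mul_pos_left (hx.trans_le hxX) hX.le).le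
  have denom_le : lam * x ^ p ≤ K ^ p :=
    calc lam * x ^ p ≤ lam * (K * X) ^ p := by gcongr
      _ = K ^ p * (lam * X ^ p) := by rw [Real.mul_rpow hK hX.le]; ring
      _ = K ^ p := by rw [hscale, mul_one]
  rw [div_mul_eq_mul_div]
  gcongr
  exact rpow_neg_abs_mul_rpow_le_rpow s hX hXx hxX

theorem ofReal_mul_le_tsum_succ {f : ℕ → ℝ≥0∞} {a : ℝ≥0∞} {X : ℝ} (hX : 2⁻¹ ≤ X)
    (hf : ∀ n : ℕ, X ≤ n → n ≤ 4 * X → a ≤ f n) :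
    ENNReal.ofReal X * a ≤ ∑' i : ℕ, f (i + 1) := by
  set N := ⌈X⌉₊
  have hXN : X ≤ N := Nat.le_ceil X
  have hNX : (N : ℝ) ≤ 2 * X := Nat.ceil_le_two_mul hX
  have window : ∀ i ∈ Finset.Ico N (2 * N), a ≤ f (i + 1) := by
    intro i hi
    obtain ⟨hNi, hiN⟩ := Finset.mem_Ico.1 hi
    have lower : (N : ℝ) ≤ (i + 1 : ℕ) := by exact_mod_cast hNi.trans i.le_succ
    have upper : ((i + 1 : ℕ) : ℝ) ≤ 2 * N := by exact_mod_cast hiN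
    exact hf (i + 1) (hXN.trans lower) (by linarith)
  calc ENNReal.ofReal X * a ≤ N * a := by
        gcongr
        exact ENNReal.ofReal_le_natCast.2 hXN
    _ = (Finset.Ico N (2 * N)).card • a := by
        rw [Nat.card_Ico, two_mul, Nat.add_sub_cancel, nsmul_eq_mul]
    _ ≤ ∑ i ∈ Finset.Ico N (2 * N), f (i + 1) := Finset.card_nsmul_le_sum _ _ a window
    _ ≤ ∑' i : ℕ, f (i + 1) := ENNReal.sum_le_tsum _

theorem mul_rpow_add_one_le_tsum {X lam p : ℝ} (s : ℝ) (hp : 0 ≤ p) (hlam : 0 ≤ lam)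
    (hX : 2⁻¹ ≤ X) (hscale : lam * X ^ p = 1) :
    ENNReal.ofReal (4 ^ (-|s|) / (1 + 4 ^ p) * X ^ (s + 1)) ≤
      ∑' i : ℕ, ENNReal.ofReal
        (((i + 1 : ℕ) : ℝ) ^ s / (1 + lam * ((i + 1 : ℕ) : ℝ) ^ p)) := by
  have hX0 : 0 < X := lt_of_lt_of_le (by norm_num) hX
  calc ENNReal.ofReal (4 ^ (-|s|) / (1 + 4 ^ p) * X ^ (s + 1))
      = ENNReal.ofReal X * ENNReal.ofReal (4 ^ (-|s|) / (1 + 4 ^ p) * X ^ s) := by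
        rw [← ENNReal.ofReal_mul hX0.le, Real.rpow_add_one hX0.ne']
        ring_nf
    _ ≤ _ := ofReal_mul_le_tsum_succ (f := fun n ↦ ENNReal.ofReal
          ((n : ℝ) ^ s / (1 + lam * (n : ℝ) ^ p))) hX fun _ hXn hnX ↦
        ENNReal.ofReal_le_ofReal
          (mul_rpow_le_rpow_div_one_add_mul_rpow s hp hlam hX0 hscale hXn hnX)

theorem stmt5_general (s : ℝ) {p : ℝ} (hp : 0 < p) :
    ∃ c : ℝ, 0 < c ∧ ∀ lam : ℝ, lam ∈ Set.Ioc (0 : ℝ) 1 →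
      ENNReal.ofReal (c * lam ^ (-((s + 1) / p))) ≤
        ∑' i : ℕ, ENNReal.ofReal
          (((i + 1 : ℕ) : ℝ) ^ s / (1 + lam * ((i + 1 : ℕ) : ℝ) ^ p)) := by
  refine ⟨4 ^ (-|s|) / (1 + 4 ^ p), by positivity, fun lam ⟨hlam, hlam_one⟩ ↦ ?_⟩
  have one_le_scale : 1 ≤ lam ^ (-p⁻¹) :=
    Real.one_le_rpow_of_pos_of_le_one_of_nonpos hlam hlam_one (by simpa using hp.le)
  have hscale : lam * (lam ^ (-p⁻¹)) ^ p = 1 := by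
    rw [← Real.rpow_mul hlam.le, neg_mul, inv_mul_cancel₀ hp.ne', Real.rpow_neg_one,
      mul_inv_cancel₀ hlam.ne']
  have scale_rpow : lam ^ (-((s + 1) / p)) = (lam ^ (-p⁻¹)) ^ (s + 1) := by
    rw [← Real.rpow_mul hlam.le, neg_mul, inv_mul_eq_div]
  rw [scale_rpow]
  exact mul_rpow_add_one_le_tsum s hp.le hlam.le (by linarith) hscale

/-- For `m ∈ ℕ` and real `α > m + 1/2`, there is `c > 0` such that for all
`λ ∈ (0,1]`, `Σ_{i≥1} i^(2m)/(1 + λ·i^(2α)) ≥ c·λ^(-(2m+1)/(2α))`. -/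
theorem stmt5 (m : ℕ) (α : ℝ) (hα : (m : ℝ) + 1 / 2 < α) :
    ∃ c : ℝ, 0 < c ∧ ∀ lam : ℝ, lam ∈ Set.Ioc (0 : ℝ) 1 →
      ENNReal.ofReal (c * lam ^ (-((2 * (m : ℝ) + 1) / (2 * α))))
        ≤ ∑' i : ℕ, ENNReal.ofReal
            (((i + 1 : ℕ) : ℝ) ^ (2 * (m : ℝ)) / (1 + lam * ((i + 1 : ℕ) : ℝ) ^ (2 * α))) :=
  stmt5_general (2 * m) (by linarith [m.cast_nonneg (α := ℝ)])
end

section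
/- Let m ∈ ℕ (including 0) and let α be a real number with α > m + 1/2. Let ψ_j denote the Fourier basis on [0,1] and set μ_j = j^{-2α} for j ≥ 1. There exists a constant c > 0 (depending only on α and m) such that for every λ ∈ (0,1] and every x ∈ [0,1], Σ_{j=1}^∞ (μ_j/(λ + μ_j)) · (ψ_j^{(m)}(x))² ≥ c · λ^{-(2m+1)/(2α)}. -/
/-- The Fourier basis on `[0,1]`: `ψ_1(x) = 1`, `ψ_{2i}(x) = √2·cos(2πix)`,
`ψ_{2i+1}(x) = √2·sin(2πix)` for `i ≥ 1`. -/
noncomputable def fourierPsi (j : ℕ) : ℝ → ℝ :=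
  if j = 1 then fun _ => 1
  else if j % 2 = 0 then fun x => Real.sqrt 2 * Real.cos (2 * Real.pi * ((j / 2 : ℕ) : ℝ) * x)
  else fun x => Real.sqrt 2 * Real.sin (2 * Real.pi * ((j / 2 : ℕ) : ℝ) * x)

/-!
The value `(ψ_{2i}^{(m)})² + (ψ_{2i+1}^{(m)})² = 2 (2πi)^{2m}` of a frequency pair does not depend
on `x`. Put `N = λ^{-1/(2α)}`. For indices `j` of order `N`, `μ_j` is of order `λ`, so the weights
`μ_j / (λ + μ_j)` stay above a positive constant. At least `N` pairs of this size have `i ≥ N`; each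
is worth at least `N^{2m}`, so together they already contribute a constant multiple of
`N^{2m+1} = λ^{-(2m+1)/(2α)}`.
-/

lemma iteratedDeriv_cos_sq_add_iteratedDeriv_sin_sq (n : ℕ) (x : ℝ) :
    iteratedDeriv n Real.cos x ^ 2 + iteratedDeriv n Real.sin x ^ 2 = 1 := by
  induction n with
  | zero => simp
  | succ n ih =>
    rw [Real.iteratedDeriv_add_one_sin, Real.iteratedDeriv_add_one_cos, Pi.neg_apply, neg_sq,
      add_comm, ih]

lemma iteratedDeriv_const_mul_comp_const_mul {𝕜 : Type*} [NontriviallyNormedField 𝕜] {f : 𝕜 → 𝕜}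
    {n : ℕ} (hf : ContDiff 𝕜 n f) (a ω x : 𝕜) :
    iteratedDeriv n (fun y => a * f (ω * y)) x = a * (ω ^ n * iteratedDeriv n f (ω * x)) := by
  rw [iteratedDeriv_const_mul_field a (fun y => f (ω * y)), iteratedDeriv_comp_const_mul hf]

lemma iteratedDeriv_mul_cos_sq_add_iteratedDeriv_mul_sin_sq (n : ℕ) (a ω x : ℝ) :
    iteratedDeriv n (fun y => a * Real.cos (ω * y)) x ^ 2
        + iteratedDeriv n (fun y => a * Real.sin (ω * y)) x ^ 2
      = a ^ 2 * ω ^ (2 * n) := by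
  rw [iteratedDeriv_const_mul_comp_const_mul Real.contDiff_cos,
    iteratedDeriv_const_mul_comp_const_mul Real.contDiff_sin]
  linear_combination
    a ^ 2 * ω ^ (2 * n) * iteratedDeriv_cos_sq_add_iteratedDeriv_sin_sq n (ω * x)

lemma fourierPsi_two_mul (i : ℕ) :
    fourierPsi (2 * i) = fun x => √2 * Real.cos (2 * Real.pi * i * x) := by
  have h : 2 * i ≠ 1 := by omega
  simp [fourierPsi, h]

lemma fourierPsi_two_mul_add_one {i : ℕ} (hi : i ≠ 0) :
    fourierPsi (2 * i + 1) = fun x => √2 * Real.sin (2 * Real.pi * i * x) := by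
  have h : (2 * i + 1) / 2 = i := by omega
  simp [fourierPsi, hi, h, Nat.add_mod]

lemma iteratedDeriv_fourierPsi_sq_add_sq (m : ℕ) {i : ℕ} (hi : i ≠ 0) (x : ℝ) :
    iteratedDeriv m (fourierPsi (2 * i)) x ^ 2 + iteratedDeriv m (fourierPsi (2 * i + 1)) x ^ 2
      = 2 * (2 * Real.pi * i) ^ (2 * m) := by
  rw [fourierPsi_two_mul, fourierPsi_two_mul_add_one hi,
    iteratedDeriv_mul_cos_sq_add_iteratedDeriv_mul_sin_sq, Real.sq_sqrt zero_le_two]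

lemma sum_Ico_two_mul {M : Type*} [AddCommMonoid M] (f : ℕ → M) (a b : ℕ) :
    ∑ j ∈ Finset.Ico (2 * a) (2 * b), f j = ∑ i ∈ Finset.Ico a b, (f (2 * i) + f (2 * i + 1)) := by
  rcases le_total b a with hba | hab
  · rw [Finset.Ico_eq_empty_of_le hba, Finset.Ico_eq_empty_of_le (by omega), Finset.sum_empty,
      Finset.sum_empty]
  · induction b, hab using Nat.le_induction with
    | base => simp only [Finset.Ico_self, Finset.sum_empty]
    | succ b hab ih =>
      rw [Nat.mul_succ, Finset.sum_Ico_succ_top (by omega), Finset.sum_Ico_succ_top (by omega), ih,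
        Finset.sum_Ico_succ_top hab, add_assoc]

lemma sum_Ico_iteratedDeriv_fourierPsi_sq (m : ℕ) {a : ℕ} (ha : 0 < a) (b : ℕ) (x : ℝ) :
    ∑ j ∈ Finset.Ico (2 * a) (2 * b), iteratedDeriv m (fourierPsi j) x ^ 2
      = ∑ i ∈ Finset.Ico a b, 2 * (2 * Real.pi * i) ^ (2 * m) := by
  rw [sum_Ico_two_mul]
  refine Finset.sum_congr rfl fun i hi => iteratedDeriv_fourierPsi_sq_add_sq m ?_ x
  exact (ha.trans_le (Finset.mem_Ico.1 hi).1).ne'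

lemma pow_le_sum_Ico_iteratedDeriv_fourierPsi_sq (m : ℕ) {K : ℕ} (hK : 0 < K) (x : ℝ) :
    (K : ℝ) ^ (2 * m + 1)
      ≤ ∑ j ∈ Finset.Ico (2 * K) (4 * K), iteratedDeriv m (fourierPsi j) x ^ 2 := by
  have hterm : ∀ i ∈ Finset.Ico K (2 * K),
      (K : ℝ) ^ (2 * m) ≤ 2 * (2 * Real.pi * i) ^ (2 * m) := fun i hi => by
    have hKi : (K : ℝ) ≤ i := by exact_mod_cast (Finset.mem_Ico.1 hi).1
    have hfreq : (K : ℝ) ≤ 2 * Real.pi * i :=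
      hKi.trans (le_mul_of_one_le_left i.cast_nonneg (by linarith [Real.pi_gt_three]))
    calc (K : ℝ) ^ (2 * m) ≤ (2 * Real.pi * i) ^ (2 * m) := by gcongr
      _ ≤ 2 * (2 * Real.pi * i) ^ (2 * m) :=
        le_mul_of_one_le_left (by positivity) one_le_two
  calc (K : ℝ) ^ (2 * m + 1) = ∑ _i ∈ Finset.Ico K (2 * K), (K : ℝ) ^ (2 * m) := by
        rw [Finset.sum_const, Nat.card_Ico, two_mul K, Nat.add_sub_cancel, nsmul_eq_mul, pow_succ']
    _ ≤ ∑ i ∈ Finset.Ico K (2 * K), 2 * (2 * Real.pi * i) ^ (2 * m) := Finset.sum_le_sum hterm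
    _ = ∑ j ∈ Finset.Ico (2 * K) (4 * K), iteratedDeriv m (fourierPsi j) x ^ 2 := by
        rw [← sum_Ico_iteratedDeriv_fourierPsi_sq m hK, show 2 * (2 * K) = 4 * K by ring]

lemma sum_Ico_le_tsum_add_one (f : ℕ → ENNReal) {a : ℕ} (ha : 0 < a) (b : ℕ) :
    ∑ j ∈ Finset.Ico a b, f j ≤ ∑' j, f (j + 1) := by
  obtain ⟨a, rfl⟩ := Nat.exists_eq_add_one.2 ha
  calc ∑ j ∈ Finset.Ico (a + 1) b, f j ≤ ∑ j ∈ Finset.Ico (a + 1) (b + 1), f j :=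
        Finset.sum_le_sum_of_subset (Finset.Ico_subset_Ico_right b.le_succ)
    _ = ∑ j ∈ Finset.Ico a b, f (j + 1) := (Finset.sum_Ico_add' f a b 1).symm
    _ ≤ ∑' j, f (j + 1) := ENNReal.sum_le_tsum _

lemma ofReal_mul_pow_le_tsum_mul_iteratedDeriv_fourierPsi_sq (m : ℕ) {w : ℕ → ℝ} {a : ℝ}
    (ha : 0 ≤ a) {K : ℕ} (hK : 0 < K) (hw : ∀ j ∈ Finset.Ico (2 * K) (4 * K), a ≤ w j) (x : ℝ) :
    ENNReal.ofReal (a * K ^ (2 * m + 1))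
      ≤ ∑' j : ℕ, ENNReal.ofReal (w (j + 1) * iteratedDeriv m (fourierPsi (j + 1)) x ^ 2) := by
  set F : ℕ → ℝ := fun j => iteratedDeriv m (fourierPsi j) x ^ 2
  have hsum : a * K ^ (2 * m + 1) ≤ ∑ j ∈ Finset.Ico (2 * K) (4 * K), w j * F j :=
    calc a * K ^ (2 * m + 1) ≤ a * ∑ j ∈ Finset.Ico (2 * K) (4 * K), F j := by
          gcongr
          exact pow_le_sum_Ico_iteratedDeriv_fourierPsi_sq m hK x
      _ = ∑ j ∈ Finset.Ico (2 * K) (4 * K), a * F j := Finset.mul_sum ..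
      _ ≤ ∑ j ∈ Finset.Ico (2 * K) (4 * K), w j * F j :=
          Finset.sum_le_sum fun j hj => mul_le_mul_of_nonneg_right (hw j hj) (sq_nonneg _)
  calc ENNReal.ofReal (a * K ^ (2 * m + 1))
      ≤ ENNReal.ofReal (∑ j ∈ Finset.Ico (2 * K) (4 * K), w j * F j) :=
        ENNReal.ofReal_le_ofReal hsum
    _ = ∑ j ∈ Finset.Ico (2 * K) (4 * K), ENNReal.ofReal (w j * F j) :=
        ENNReal.ofReal_sum_of_nonneg fun j hj => mul_nonneg (ha.trans (hw j hj)) (sq_nonneg _)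
    _ ≤ ∑' j : ℕ, ENNReal.ofReal (w (j + 1) * F (j + 1)) :=
        sum_Ico_le_tsum_add_one (fun j => ENNReal.ofReal (w j * F j)) (by omega) _

lemma div_one_add_le_div_add_of_mul_le {𝕜 : Type*} [Field 𝕜] [LinearOrder 𝕜]
    [IsStrictOrderedRing 𝕜] {b lam μ : 𝕜} (hb : 0 ≤ b) (hlam : 0 < lam) (h : b * lam ≤ μ) :
    b / (1 + b) ≤ μ / (lam + μ) := by
  have hμ : 0 ≤ μ := (mul_nonneg hb hlam.le).trans h
  rw [div_le_div_iff₀ (by positivity) (by positivity)]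
  linarith

lemma rpow_neg_mul_le_rpow_neg {s C lam t : ℝ} (hs : 0 < s) (hC : 0 ≤ C) (hlam : 0 ≤ lam)
    (ht : 0 < t) (htC : t ≤ C * lam ^ (-s⁻¹)) : C ^ (-s) * lam ≤ t ^ (-s) :=
  calc C ^ (-s) * lam = (C * lam ^ (-s⁻¹)) ^ (-s) := by
        rw [Real.mul_rpow hC (by positivity), ← Real.rpow_mul hlam, neg_mul_neg,
          inv_mul_cancel₀ hs.ne', Real.rpow_one]
    _ ≤ t ^ (-s) := Real.rpow_le_rpow_of_nonpos ht htC (neg_nonpos.2 hs.le)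

theorem stmt6_general (m : ℕ) {α : ℝ} (hα : 0 < α) :
    ∃ c : ℝ, 0 < c ∧ ∀ lam : ℝ, lam ∈ Set.Ioc (0 : ℝ) 1 → ∀ x : ℝ,
      ENNReal.ofReal (c * lam ^ (-((2 * (m : ℝ) + 1) / (2 * α))))
        ≤ ∑' j : ℕ, ENNReal.ofReal
            ((((j + 1 : ℕ) : ℝ) ^ (-(2 * α)) / (lam + ((j + 1 : ℕ) : ℝ) ^ (-(2 * α)))) *
              (iteratedDeriv m (fourierPsi (j + 1)) x) ^ 2) := by
  set b : ℝ := 8 ^ (-(2 * α))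
  refine ⟨b / (1 + b), by positivity, fun lam ⟨hlam, hlam1⟩ x => ?_⟩
  set N : ℝ := lam ^ (-(2 * α)⁻¹) with hN
  have hN1 : 1 ≤ N :=
    Real.one_le_rpow_of_pos_of_le_one_of_nonpos hlam hlam1 (neg_nonpos.2 (by positivity))
  have hNpow : lam ^ (-((2 * (m : ℝ) + 1) / (2 * α))) = N ^ (2 * m + 1) := by
    rw [hN, ← Real.rpow_mul_natCast hlam.le, div_eq_inv_mul, neg_mul, Nat.cast_succ,
      Nat.cast_mul, Nat.cast_two]
  have hweight : ∀ j ∈ Finset.Ico (2 * ⌈N⌉₊) (4 * ⌈N⌉₊),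
      b / (1 + b) ≤ (j : ℝ) ^ (-(2 * α)) / (lam + (j : ℝ) ^ (-(2 * α))) := fun j hj => by
    obtain ⟨hKj, hjK⟩ := Finset.mem_Ico.1 hj
    have hj0 : (0 : ℝ) < j := by exact_mod_cast (by omega : 0 < j)
    have hjN : (j : ℝ) ≤ 8 * N := by
      have hjK' : (j : ℝ) ≤ 4 * ⌈N⌉₊ := by exact_mod_cast hjK.le
      linarith [Nat.ceil_le_two_mul (by linarith : 2⁻¹ ≤ N)]
    exact div_one_add_le_div_add_of_mul_le (by positivity) hlam
      (rpow_neg_mul_le_rpow_neg (by positivity) (by norm_num) hlam.le hj0 hjN)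
  calc _ ≤ ENNReal.ofReal (b / (1 + b) * ⌈N⌉₊ ^ (2 * m + 1)) := by
        rw [hNpow]
        gcongr
        exact Nat.le_ceil N
    _ ≤ _ := ofReal_mul_pow_le_tsum_mul_iteratedDeriv_fourierPsi_sq m (by positivity)
        (Nat.ceil_pos.2 (by linarith)) hweight x

/-- For `m ∈ ℕ` and real `α > m + 1/2`, with `μ_j = j^(-2α)` and `ψ_j` the
Fourier basis on `[0,1]`, there is `c > 0` such that for every `λ ∈ (0,1]` and every
`x ∈ [0,1]`, `Σ_{j≥1} (μ_j/(λ+μ_j))·(ψ_j^{(m)}(x))² ≥ c·λ^(-(2m+1)/(2α))`. -/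
theorem stmt6 (m : ℕ) (α : ℝ) (hα : (m : ℝ) + 1 / 2 < α) :
    ∃ c : ℝ, 0 < c ∧ ∀ lam : ℝ, lam ∈ Set.Ioc (0 : ℝ) 1 → ∀ x ∈ Set.Icc (0 : ℝ) 1,
      ENNReal.ofReal (c * lam ^ (-((2 * (m : ℝ) + 1) / (2 * α))))
        ≤ ∑' j : ℕ, ENNReal.ofReal
            ((((j + 1 : ℕ) : ℝ) ^ (-(2 * α)) / (lam + ((j + 1 : ℕ) : ℝ) ^ (-(2 * α)))) *
              (iteratedDeriv m (fourierPsi (j + 1)) x) ^ 2) := by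
  have hα0 : 0 < α := by linarith [Nat.cast_nonneg (α := ℝ) m]
  obtain ⟨c, hc, hbound⟩ := stmt6_general m hα0
  exact ⟨c, hc, fun lam hlam x _ => hbound lam hlam x⟩
end

section
/- Let n ≥ 1, let K be an n×n real positive semidefinite symmetric matrix, let λ > 0, and let f ∈ ℝⁿ. Let ε = (ε_1, ..., ε_n) be a random vector with independent N(0, σ₀²) coordinates (σ₀ > 0), and set Y = f + ε and σ̂²_n = λ · Yᵀ (K + nλ·I_n)^{-1} Y. Then Var(σ̂²_n) ≤ 2 σ₀⁴ / n + 4 σ₀² ‖f‖² / n², where ‖f‖ is the Euclidean norm of f. -/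
open Matrix MeasureTheory ProbabilityTheory
open scoped NNReal

/-!
Rotating by an orthogonal matrix that diagonalizes the symmetric matrix `A` turns `YᵀAY` into
`∑ aᵢ Zᵢ²`, where the `Zᵢ` are again independent Gaussian variables of variance `v`, now centred at
the rotated mean. Since `Var(Zᵢ²) = 2v² + 4v(E Zᵢ)²`, this gives
`Var(YᵀAY) = 2v² tr(A²) + 4v fᵀA²f`; the fourth moment needed here is read off the differential
equation `M' = (E Zᵢ + vt)M` of the moment generating function of `Zᵢ`. With `c = nλ`, the estimator
is `YᵀAY / n` for `A = c(K + c)⁻¹`, and `A² ≤ 1` in the Loewner order because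
`(K + c)² - c² = K² + 2cK ≥ 0`; hence `tr(A²) ≤ n` and `fᵀA²f ≤ ‖f‖²`.
-/

section GaussianMoments

lemma iteratedDeriv_succ_affine_mul {𝕜 : Type*} [NontriviallyNormedField 𝕜] {g : 𝕜 → 𝕜} {t : 𝕜}
    (k : ℕ) (hg : ContDiffAt 𝕜 (k + 1) g t) (a b : 𝕜) :
    iteratedDeriv (k + 1) (fun s => (a + b * s) * g s) t =
      (a + b * t) * iteratedDeriv (k + 1) g t + (k + 1) * b * iteratedDeriv k g t := by
  have hderiv : deriv (fun s : 𝕜 => a + b * s) = fun _ => b := by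
    ext s
    simp
  rw [iteratedDeriv_fun_mul (by fun_prop) (by exact_mod_cast hg), Finset.sum_range_succ',
    Finset.sum_range_succ']
  simp only [iteratedDeriv_succ', hderiv, iteratedDeriv_const, Nat.add_eq_zero_iff, one_ne_zero,
    and_false, ↓reduceIte, mul_zero, Nat.reduceSubDiff, zero_mul, Finset.sum_const_zero, zero_add,
    Nat.choose_one_right, Nat.cast_add, Nat.cast_one, add_tsub_cancel_right, Nat.choose_zero_right,
    iteratedDeriv_zero, one_mul, tsub_zero]
  ring

variable (m : ℝ) (v : ℝ≥0)

lemma deriv_mgf_gaussianReal :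
    deriv (mgf (fun x => x) (gaussianReal m v)) =
      fun t => (m + v * t) * mgf (fun x => x) (gaussianReal m v) t := by
  ext t
  have hexponent : HasDerivAt (fun t : ℝ => m * t + v * t ^ 2 / 2) (m + v * t) t :=
    (((hasDerivAt_id' t).const_mul m).add
      (((hasDerivAt_pow 2 t).const_mul (v : ℝ)).div_const 2)).congr_deriv (by push_cast; ring)
  rw [mgf_fun_id_gaussianReal, hexponent.exp.deriv, mul_comm]

lemma integral_pow_add_two_gaussianReal (k : ℕ) :
    ∫ x, x ^ (k + 2) ∂gaussianReal m v =
      m * ∫ x, x ^ (k + 1) ∂gaussianReal m v + (k + 1) * v * ∫ x, x ^ k ∂gaussianReal m v := by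
  have hmoment (j : ℕ) : iteratedDeriv j (mgf (fun x => x) (gaussianReal m v)) 0 =
      ∫ x, x ^ j ∂gaussianReal m v := by
    simpa using iteratedDeriv_mgf_zero (X := fun x : ℝ => x) (μ := gaussianReal m v) (by simp) j
  have hsmooth : ContDiffAt ℝ (k + 1) (mgf (fun x => x) (gaussianReal m v)) 0 := by
    rw [mgf_fun_id_gaussianReal]
    fun_prop
  rw [← hmoment (k + 2), iteratedDeriv_succ', deriv_mgf_gaussianReal,
    iteratedDeriv_succ_affine_mul k hsmooth, hmoment, hmoment, mul_zero, add_zero]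

lemma memLp_sq_gaussianReal : MemLp (fun x => x ^ 2) 2 (gaussianReal m v) := by
  rw [memLp_two_iff_integrable_sq (by fun_prop)]
  simpa only [← pow_mul] using
    integrable_pow_of_mem_interior_integrableExpSet (X := fun x : ℝ => x) (by simp) 4

lemma variance_sq_gaussianReal :
    Var[fun x => x ^ 2; gaussianReal m v] = 2 * v ^ 2 + 4 * m ^ 2 * v := by
  have h2 : ∫ x, x ^ 2 ∂gaussianReal m v = m ^ 2 + v := by
    simpa [sq] using integral_pow_add_two_gaussianReal m v 0
  have h3 : ∫ x, x ^ 3 ∂gaussianReal m v = m ^ 3 + 3 * m * v := by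
    rw [integral_pow_add_two_gaussianReal m v 1]
    simp only [Nat.reduceAdd, h2, Nat.cast_one, pow_one, integral_id_gaussianReal]
    ring
  have h4 : ∫ x, x ^ 4 ∂gaussianReal m v = m ^ 4 + 6 * m ^ 2 * v + 3 * v ^ 2 := by
    rw [integral_pow_add_two_gaussianReal m v 2, h3, h2]
    push_cast
    ring
  rw [variance_eq_sub (memLp_sq_gaussianReal m v)]
  simp only [Pi.pow_apply, ← pow_mul, h2, h4]
  ring

end GaussianMoments

section GaussianVectors

variable {ι κ : Type*} [Fintype ι] [Fintype κ]

lemma charFun_map_mulVec (P : Measure (ι → ℝ)) (Q : Matrix κ ι ℝ) (t : EuclideanSpace ℝ κ) :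
    charFun ((P.map (Q *ᵥ ·)).map (WithLp.toLp 2)) t =
      charFun (P.map (WithLp.toLp 2)) (WithLp.toLp 2 (Qᵀ *ᵥ t.ofLp)) := by
  rw [Measure.map_map (by fun_prop) (by fun_prop), charFun_apply, charFun_apply,
    integral_map (by fun_prop) (by fun_prop), integral_map (by fun_prop) (by fun_prop)]
  simp [EuclideanSpace.inner_eq_star_dotProduct, dotProduct_mulVec, mulVec_transpose]

lemma charFun_pi_gaussianReal (m : ι → ℝ) (v : ℝ≥0) (t : EuclideanSpace ℝ ι) :
    charFun ((Measure.pi fun i => gaussianReal (m i) v).map (WithLp.toLp 2)) t =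
      Complex.exp (↑(t.ofLp ⬝ᵥ m) * Complex.I - ↑(v * (t.ofLp ⬝ᵥ t.ofLp)) / 2) := by
  simp_rw [charFun_pi, charFun_gaussianReal, ← Complex.exp_sum]
  simp [dotProduct, Finset.sum_mul, Finset.mul_sum, Finset.sum_div, sq]

lemma measurePreserving_mulVec_pi_gaussianReal [DecidableEq κ] {Q : Matrix κ ι ℝ}
    (hQ : Q * Qᵀ = 1) (m : ι → ℝ) (v : ℝ≥0) :
    MeasurePreserving (Q *ᵥ ·) (Measure.pi fun i => gaussianReal (m i) v)
      (Measure.pi fun i => gaussianReal ((Q *ᵥ m) i) v) where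
  measurable := by fun_prop
  map_eq := by
    rw [← charFun_eq_pi_iff]
    intro t
    have hnorm : (Qᵀ *ᵥ t.ofLp) ⬝ᵥ (Qᵀ *ᵥ t.ofLp) = t.ofLp ⬝ᵥ t.ofLp := by
      rw [dotProduct_mulVec, vecMul_transpose, mulVec_mulVec, hQ, one_mulVec]
    have hmean : (Qᵀ *ᵥ t.ofLp) ⬝ᵥ m = t.ofLp ⬝ᵥ (Q *ᵥ m) := by
      rw [mulVec_transpose, dotProduct_mulVec]
    rw [charFun_map_mulVec, charFun_pi_gaussianReal, hnorm, hmean, ← charFun_pi_gaussianReal,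
      charFun_pi]

lemma measurePreserving_const_add_pi_gaussianReal (f m : ι → ℝ) (v : ι → ℝ≥0) :
    MeasurePreserving (f + ·) (Measure.pi fun i => gaussianReal (m i) (v i))
      (Measure.pi fun i => gaussianReal (m i + f i) (v i)) :=
  measurePreserving_pi _ _ fun i => ⟨measurable_const_add (f i), gaussianReal_map_const_add (f i)⟩

lemma variance_sum_mul_sq_pi_gaussianReal (a m : ι → ℝ) (v : ι → ℝ≥0) :
    Var[fun x : ι → ℝ => ∑ i, a i * x i ^ 2; Measure.pi fun i => gaussianReal (m i) (v i)] =
      ∑ i, a i ^ 2 * (2 * v i ^ 2 + 4 * m i ^ 2 * v i) := by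
  have hsum := variance_sum_pi (μ := fun i => gaussianReal (m i) (v i))
    (X := fun i x => a i * x ^ 2) fun i => (memLp_sq_gaussianReal (m i) (v i)).const_mul (a i)
  simpa only [Finset.sum_fn, variance_const_mul, variance_sq_gaussianReal] using hsum

end GaussianVectors

section OrthogonalDiagonalization

variable {ι κ R : Type*} [Fintype ι] [Fintype κ] [DecidableEq κ] [CommSemiring R]

lemma dotProduct_transpose_mul_diagonal_mul_mulVec (Q : Matrix κ ι R) (a : κ → R) (x : ι → R) :
    x ⬝ᵥ ((Qᵀ * diagonal a * Q) *ᵥ x) = ∑ i, a i * (Q *ᵥ x) i ^ 2 := by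
  rw [← mulVec_mulVec, ← mulVec_mulVec, dotProduct_mulVec, vecMul_transpose]
  simp only [dotProduct, mulVec_diagonal]
  exact Finset.sum_congr rfl fun i _ => by ring

lemma trace_transpose_mul_diagonal_mul {Q : Matrix κ ι R} (hQ : Q * Qᵀ = 1) (a : κ → R) :
    (Qᵀ * diagonal a * Q).trace = ∑ i, a i := by
  rw [trace_mul_cycle, hQ, Matrix.one_mul, trace_diagonal]

lemma sq_transpose_mul_diagonal_mul [DecidableEq ι] {Q : Matrix κ ι R}
    (hQ : Q * Qᵀ = 1) (a : κ → R) :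
    (Qᵀ * diagonal a * Q) ^ 2 = Qᵀ * diagonal (a ^ 2) * Q := by
  calc (Qᵀ * diagonal a * Q) ^ 2 = Qᵀ * diagonal a * (Q * Qᵀ) * (diagonal a * Q) := by
        simp only [sq, Matrix.mul_assoc]
    _ = Qᵀ * diagonal (a ^ 2) * Q := by
        rw [hQ, Matrix.mul_one, ← Matrix.mul_assoc, Matrix.mul_assoc Qᵀ, ← sq, diagonal_pow]

lemma exists_eq_transpose_mul_diagonal_mul [DecidableEq ι] {A : Matrix ι ι ℝ} (hA : A.IsHermitian) :
    ∃ (Q : Matrix ι ι ℝ) (a : ι → ℝ), Q * Qᵀ = 1 ∧ A = Qᵀ * diagonal a * Q := by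
  refine ⟨(hA.eigenvectorUnitary : Matrix ι ι ℝ)ᵀ, hA.eigenvalues, ?_, ?_⟩
  · simpa [star_eq_conjTranspose] using Unitary.coe_star_mul_self hA.eigenvectorUnitary
  · simpa [Unitary.conjStarAlgAut_apply, star_eq_conjTranspose, Function.comp_def] using
      hA.spectral_theorem

end OrthogonalDiagonalization

section QuadraticForms

variable {ι : Type*} [Fintype ι] [DecidableEq ι] {A : Matrix ι ι ℝ}

lemma variance_dotProduct_mulVec_pi_gaussianReal (hA : A.IsHermitian) (m : ι → ℝ) (v : ℝ≥0) :
    Var[fun y => y ⬝ᵥ (A *ᵥ y); Measure.pi fun i => gaussianReal (m i) v] =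
      2 * v ^ 2 * (A ^ 2).trace + 4 * v * (m ⬝ᵥ (A ^ 2 *ᵥ m)) := by
  obtain ⟨Q, a, hQ, rfl⟩ := exists_eq_transpose_mul_diagonal_mul hA
  simp_rw [sq_transpose_mul_diagonal_mul hQ, trace_transpose_mul_diagonal_mul hQ,
    dotProduct_transpose_mul_diagonal_mul_mulVec]
  rw [(measurePreserving_mulVec_pi_gaussianReal hQ m v).variance_fun_comp
    (f := fun z => ∑ i, a i * z i ^ 2) (Measurable.aemeasurable (by fun_prop)),
    variance_sum_mul_sq_pi_gaussianReal, Finset.mul_sum, Finset.mul_sum, ← Finset.sum_add_distrib]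
  exact Finset.sum_congr rfl fun i _ => by simp only [Pi.pow_apply]; ring

lemma trace_le_card_of_posSemidef_one_sub (hA : (1 - A).PosSemidef) :
    A.trace ≤ Fintype.card ι := by
  simpa [trace_sub] using hA.trace_nonneg

lemma dotProduct_mulVec_le_of_posSemidef_one_sub (hA : (1 - A).PosSemidef) (x : ι → ℝ) :
    x ⬝ᵥ (A *ᵥ x) ≤ x ⬝ᵥ x := by
  simpa [sub_mulVec, dotProduct_sub] using hA.dotProduct_mulVec_nonneg x

lemma variance_dotProduct_mulVec_pi_gaussianReal_le (hA : A.IsHermitian)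
    (hA_sq : (1 - A ^ 2).PosSemidef) (m : ι → ℝ) (v : ℝ≥0) :
    Var[fun y => y ⬝ᵥ (A *ᵥ y); Measure.pi fun i => gaussianReal (m i) v] ≤
      2 * v ^ 2 * Fintype.card ι + 4 * v * (m ⬝ᵥ m) := by
  rw [variance_dotProduct_mulVec_pi_gaussianReal hA]
  gcongr
  · exact trace_le_card_of_posSemidef_one_sub hA_sq
  · exact dotProduct_mulVec_le_of_posSemidef_one_sub hA_sq m

end QuadraticForms

section Resolvent

variable {ι : Type*} [Fintype ι] [DecidableEq ι] {K : Matrix ι ι ℝ}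

lemma isHermitian_smul_inv_add_smul_one (hK : K.IsHermitian) (c : ℝ) :
    (c • (K + c • (1 : Matrix ι ι ℝ))⁻¹).IsHermitian :=
  (hK.add (isHermitian_one.smul (.all c))).inv.smul (.all c)

lemma posSemidef_one_sub_sq_smul_inv_add_smul_one (hK : K.PosSemidef) {c : ℝ} (hc : 0 < c) :
    (1 - (c • (K + c • (1 : Matrix ι ι ℝ))⁻¹) ^ 2).PosSemidef := by
  set M := K + c • (1 : Matrix ι ι ℝ) with hM
  have hMpos : M.PosDef := PosDef.posSemidef_add hK (PosDef.one.smul hc)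
  have hdet : IsUnit M.det := M.isUnit_iff_isUnit_det.mp hMpos.isUnit
  have hsq : K ^ 2 + (2 * c) • K = M ^ 2 - (c ^ 2) • (1 : Matrix ι ι ℝ) := by
    simp only [hM, sq, add_mul, mul_add, smul_mul_assoc, mul_smul_comm, Matrix.one_mul,
      Matrix.mul_one]
    module
  have hfactor : 1 - (c • M⁻¹) ^ 2 = M⁻¹ᴴ * (K ^ 2 + (2 * c) • K) * M⁻¹ := by
    have hcancel : M⁻¹ * M ^ 2 * M⁻¹ = 1 := by
      rw [sq, ← Matrix.mul_assoc, nonsing_inv_mul M hdet, Matrix.one_mul, mul_nonsing_inv M hdet]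
    rw [hMpos.isHermitian.inv.eq, hsq, mul_sub, sub_mul, hcancel, smul_pow, mul_smul_comm,
      smul_mul_assoc, Matrix.mul_one, ← sq]
  rw [hfactor]
  exact ((hK.pow 2).add (hK.smul (by positivity))).conjTranspose_mul_mul_same M⁻¹

end Resolvent

/-- With `Y = f + ε`, `ε` having i.i.d. `N(0,σ₀²)` coordinates, and
`σ̂²_n = λ·Yᵀ(K + nλ·I)⁻¹Y`, one has
`Var(σ̂²_n) ≤ 2σ₀⁴/n + 4σ₀²‖f‖²/n²` where `‖f‖` is the Euclidean norm. -/
theorem stmt14 (n : ℕ) (hn : 1 ≤ n) (K : Matrix (Fin n) (Fin n) ℝ) (hK : K.PosSemidef)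
    (lam : ℝ) (hlam : 0 < lam) (f : Fin n → ℝ) (σ₀ : ℝ) (hσ : 0 < σ₀) :
    variance
        (fun ε : Fin n → ℝ =>
          lam * ((f + ε) ⬝ᵥ ((K + ((n : ℝ) * lam) • (1 : Matrix (Fin n) (Fin n) ℝ))⁻¹ *ᵥ (f + ε))))
        (Measure.pi fun _ : Fin n => gaussianReal 0 (Real.toNNReal (σ₀ ^ 2)))
      ≤ 2 * σ₀ ^ 4 / n + 4 * σ₀ ^ 2 * (∑ i, f i ^ 2) / (n : ℝ) ^ 2 := by
  set c := (n : ℝ) * lam with hc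
  set v := (σ₀ ^ 2).toNNReal
  have hn' : (0 : ℝ) < n := by exact_mod_cast hn
  have hv : (v : ℝ) = σ₀ ^ 2 := Real.coe_toNNReal _ (sq_nonneg σ₀)
  have hnorm : f ⬝ᵥ f = ∑ i, f i ^ 2 := by simp only [dotProduct, sq]
  have hlaw : MeasurePreserving (f + ·) (Measure.pi fun _ => gaussianReal 0 v)
      (Measure.pi fun i => gaussianReal (f i) v) := by
    simpa using measurePreserving_const_add_pi_gaussianReal f 0 fun _ => v
  have hrescale (y : Fin n → ℝ) : lam * (y ⬝ᵥ ((K + c • 1)⁻¹ *ᵥ y)) =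
      (n : ℝ)⁻¹ * (y ⬝ᵥ ((c • (K + c • 1)⁻¹) *ᵥ y)) := by
    rw [smul_mulVec, dotProduct_smul, smul_eq_mul, hc]
    field_simp
  have hbound := variance_dotProduct_mulVec_pi_gaussianReal_le
    (isHermitian_smul_inv_add_smul_one hK.isHermitian c)
    (posSemidef_one_sub_sq_smul_inv_add_smul_one hK (mul_pos hn' hlam)) f v
  simp_rw [hrescale]
  rw [variance_const_mul, hlaw.variance_fun_comp (f := fun y => y ⬝ᵥ (_ *ᵥ y)) (by fun_prop)]
  calc _ ≤ (n : ℝ)⁻¹ ^ 2 * (2 * (σ₀ ^ 2) ^ 2 * n + 4 * σ₀ ^ 2 * ∑ i, f i ^ 2) := by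
        gcongr
        simpa only [hv, hnorm, Fintype.card_fin] using hbound
    _ = 2 * σ₀ ^ 4 / n + 4 * σ₀ ^ 2 * (∑ i, f i ^ 2) / (n : ℝ) ^ 2 := by field_simp
end
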